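/- arXiv:1807.00158 — 2 statements merged into one kernel-verified Lean document; each statement's English description precedes it below -/
import Mathlib

section
/- Let R be a henselian valuation ring of finite Krull dimension, A a finite R-algebra (finitely generated as an R-module), and Q(A^red) → K a finite ring homomorphism with K reduced, where Q(A^red) is the total ring of fractions of A^red. Regarding K as an A-algebra via A → A^red → Q(A^red) → K, the set of pseudo-integral closures of A in K is non-empty. -/
/-!
STATEMENT 7: For a finite algebra `A` over a henselian valuation ring of finite Krull
dimension and a finite ring map `Q(A^red) → K` with `K` reduced, the set of
pseudo-integral closures of `A` in `K` is non-empty.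
-/

open IsLocalRing in
/-- The induced map on residue fields at a prime `q ⊆ B` and its preimage `φ⁻¹(q) ⊆ A`. -/
noncomputable def residueFieldHom {A B : Type*} [CommRing A] [CommRing B] (φ : A →+* B)
    (q : Ideal B) [q.IsPrime] :
    ResidueField (Localization.AtPrime (q.comap φ)) →+* ResidueField (Localization.AtPrime q) :=
  letI := Localization.isLocalHom_localRingHom (q.comap φ) q φ rfl
  ResidueField.map (Localization.localRingHom (q.comap φ) q φ rfl)

/-- A pseudo-integral closure of `A` in `B`: an `A`-subalgebra `C` of the integral closure
`B^ic` of `A` in `B` which is finitely generated as an `A`-module and such that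
`Spec(B^ic) → Spec(C)` is a bijection inducing isomorphisms on all residue fields. -/
def IsPseudoIntegralClosure {A B : Type*} [CommRing A] [CommRing B] [Algebra A B]
    (C : Subalgebra A B) : Prop :=
  ∃ hle : C ≤ integralClosure A B,
    Module.Finite A C ∧
    Function.Bijective (PrimeSpectrum.comap (Subalgebra.inclusion hle).toRingHom) ∧
    ∀ (q : Ideal (integralClosure A B)) (_ : q.IsPrime),
      letI := ‹q.IsPrime›
      Function.Bijective (residueFieldHom (Subalgebra.inclusion hle).toRingHom q)

open scoped TensorProduct

/-- Over a valuation ring, a vector whose finitely many coordinates do not all vanish is a scalar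
multiple of a vector having a coordinate equal to one. -/
theorem ValuationRing.exists_eq_mul_and_eq_one {V ι : Type*} [CommRing V] [IsDomain V]
    [ValuationRing V] (s : Finset ι) (a : ι → V) (h : ∃ i ∈ s, a i ≠ 0) :
    ∃ (d : V) (b : ι → V), d ≠ 0 ∧ (∀ i ∈ s, a i = d * b i) ∧ ∃ i ∈ s, b i = 1 := by
  classical
  have hdvd : ∀ t : Finset ι, t.Nonempty → ∃ j ∈ t, ∀ i ∈ t, a j ∣ a i := by
    intro t ht
    induction ht using Finset.Nonempty.cons_induction with
    | singleton i => exact ⟨i, by simp⟩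
    | cons i t hi ht ih =>
      obtain ⟨j, hj, hjt⟩ := ih
      rcases ValuationRing.dvd_total (a j) (a i) with h | h
      · exact ⟨j, by simp [hj], by simpa [h] using hjt⟩
      · exact ⟨i, by simp, by simpa using fun k hk ↦ h.trans (hjt k hk)⟩
  obtain ⟨i, hi, hai⟩ := h
  obtain ⟨j, hj, hjs⟩ := hdvd s ⟨i, hi⟩
  have hj0 : a j ≠ 0 := fun h0 ↦ hai (zero_dvd_iff.mp (h0 ▸ hjs i hi))
  choose! b hb using hjs
  refine ⟨a j, b, hj0, hb, j, hj, mul_left_cancel₀ hj0 ?_⟩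
  rw [← hb j hj, mul_one]

/-- A torsion-free algebra of finite rank over a valuation ring is quasi-finite. -/
theorem Algebra.QuasiFinite.of_injective_of_valuationRing {V F W L : Type*} [CommRing V]
    [IsDomain V] [ValuationRing V] [Field F] [Algebra V F] [IsFractionRing V F] [CommRing W]
    [Algebra V W] [AddCommGroup L] [Module F L] [Module V L] [IsScalarTower V F L]
    [Module.Finite F L] (g : W →ₗ[V] L) (hg : Function.Injective g) :
    Algebra.QuasiFinite V W := by
  refine ⟨fun P hP ↦ ?_⟩
  let κ := P.ResidueField
  obtain ⟨b, hbs, hspan, hli⟩ := exists_linearIndependent κ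
    (Set.range fun w : W ↦ (1 : κ) ⊗ₜ[V] w)
  have htop : Submodule.span κ (Set.range fun w : W ↦ (1 : κ) ⊗ₜ[V] w) = ⊤ := by
    refine Submodule.eq_top_iff'.mpr fun x ↦ ?_
    induction x with
    | zero => exact zero_mem _
    | add x y hx hy => exact add_mem hx hy
    | tmul x w =>
      have : x ⊗ₜ[V] w = x • ((1 : κ) ⊗ₜ[V] w) := by simp [TensorProduct.smul_tmul']
      rw [this]
      exact Submodule.smul_mem _ _ (Submodule.subset_span ⟨w, rfl⟩)
  choose m hm using fun x : b ↦ hbs x.2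
  have hliV : LinearIndependent V m := by
    rw [linearIndependent_iff']
    intro s a hsum
    by_contra! hne
    obtain ⟨d, c, hd, hac, j, hj, hcj⟩ := ValuationRing.exists_eq_mul_and_eq_one s a hne
    have hzero : ∑ i ∈ s, c i • m i = 0 := by
      apply hg
      have hd' : algebraMap V F d ≠ 0 := by
        simpa using hd
      have : algebraMap V F d • g (∑ i ∈ s, c i • m i) = 0 := by
        rw [algebraMap_smul, ← map_smul, Finset.smul_sum]
        simp_rw [smul_smul]
        rw [← Finset.sum_congr rfl fun i hi ↦ congrArg (· • m i) (hac i hi), hsum, map_zero]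
      rw [map_zero]
      exact (smul_eq_zero.mp this).resolve_left hd'
    have hκ : ∑ i ∈ s, algebraMap V κ (c i) • (i : κ ⊗[V] W) = 0 := by
      have := congrArg (fun w : W ↦ (1 : κ) ⊗ₜ[V] w) hzero
      simpa [TensorProduct.tmul_sum, hm] using this
    have := linearIndependent_iff'.mp hli s (fun i ↦ algebraMap V κ (c i)) hκ j hj
    simp [hcj] at this
  have hliF : LinearIndependent F (g ∘ m) :=
    (LinearIndependent.iff_fractionRing V F).mp
      (hliV.map' g (LinearMap.ker_eq_bot.mpr hg))
  have : Finite b := hliF.finite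
  rw [htop] at hspan
  exact ⟨⟨(Set.toFinite b).toFinset, by simpa using hspan⟩⟩

/-- A subalgebra of a field which is quasi-finite over a valuation ring is quasi-finite. -/
theorem Algebra.QuasiFinite.of_injective_field {R W L : Type*} [CommRing R] [IsDomain R]
    [ValuationRing R] [CommRing W] [Algebra R W] [Field L] [Algebra R L]
    [Algebra.QuasiFinite R L] (g : W →ₐ[R] L) (hg : Function.Injective g) :
    Algebra.QuasiFinite R W := by
  let P := RingHom.ker (algebraMap R L)
  have : P.IsPrime := RingHom.ker_isPrime _
  have : ValuationRing (R ⧸ P) :=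
    Function.Surjective.valuationRing (Ideal.Quotient.mk P) Ideal.Quotient.mk_surjective
  let F := FractionRing (R ⧸ P)
  let i : R ⧸ P →+* L := RingHom.kerLift (algebraMap R L)
  have hi : Function.Injective i := RingHom.kerLift_injective _
  let _ : Algebra (R ⧸ P) L := i.toAlgebra
  have : FaithfulSMul (R ⧸ P) L := (faithfulSMul_iff_algebraMap_injective _ _).mpr hi
  have : IsScalarTower R (R ⧸ P) L := .of_algebraMap_eq' rfl
  let _ : Algebra F L := FractionRing.liftAlgebra (R ⧸ P) L
  have : IsScalarTower (R ⧸ P) F L := FractionRing.isScalarTower_liftAlgebra _ _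
  have : Algebra.QuasiFinite (R ⧸ P) L := .of_restrictScalars R _ _
  have : Algebra.QuasiFinite F L := .of_restrictScalars (R ⧸ P) _ _
  have : IsArtinianRing F := DivisionSemiring.instIsArtinianRing
  have : Module.Finite F L := .of_quasiFinite
  have hker (r : R) (hr : r ∈ P) : algebraMap R W r = 0 := by
    apply hg
    rw [AlgHom.commutes, map_zero]
    exact hr
  let _ : Algebra (R ⧸ P) W := (Ideal.Quotient.lift P (algebraMap R W) hker).toAlgebra
  have : IsScalarTower R (R ⧸ P) W := .of_algebraMap_eq' rfl
  let g' : W →ₗ[R ⧸ P] L :=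
    { toFun := g
      map_add' := map_add g
      map_smul' := fun x w ↦ by
        obtain ⟨r, rfl⟩ := Ideal.Quotient.mk_surjective x
        change g (algebraMap (R ⧸ P) W (algebraMap R (R ⧸ P) r) * w) =
          algebraMap (R ⧸ P) L (algebraMap R (R ⧸ P) r) * g w
        rw [← IsScalarTower.algebraMap_apply, ← IsScalarTower.algebraMap_apply, map_mul,
          AlgHom.commutes] }
  have : Algebra.QuasiFinite (R ⧸ P) W := .of_injective_of_valuationRing (F := F) g' hg
  exact .trans R (R ⧸ P) W

/-- A linear order of finite Krull dimension is finite. -/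
theorem Order.finite_of_krullDim_lt_top {α : Type*} [LinearOrder α]
    (h : Order.krullDim α < ⊤) : Finite α := by
  by_contra hinf
  rw [not_finite_iff_infinite] at hinf
  have : FiniteDimensionalOrder α :=
    Order.finiteDimensionalOrder_iff_krullDim_ne_bot_and_top.mpr ⟨by simp, h.ne⟩
  let n := (LTSeries.longestOf α).length
  obtain ⟨s, hs⟩ := Infinite.exists_subset_card_eq α (n + 2)
  let l : LTSeries α := ⟨n + 1, s.orderEmbOfFin hs, fun i ↦ by simp⟩
  have := l.longestOf_is_longest
  change n + 1 ≤ n at this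
  lia

theorem ValuationRing.finite_primeSpectrum {R : Type*} [CommRing R] [IsDomain R]
    [ValuationRing R] (h : ringKrullDim R < ⊤) : Finite (PrimeSpectrum R) := by
  classical
  let _ : LinearOrder (PrimeSpectrum R) :=
    { (inferInstance : PartialOrder (PrimeSpectrum R)) with
      le_total := fun p q ↦ le_total p.asIdeal q.asIdeal
      toDecidableLE := Classical.decRel _ }
  exact Order.finite_of_krullDim_lt_top h

/-- In a subalgebra of a reduced quasi-finite algebra over a valuation ring, every prime ideal
contains the kernel of the map to some residue field of the big algebra. -/
theorem Subalgebra.exists_quasiFinite_quotient {R A K : Type*} [CommRing R] [IsDomain R]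
    [ValuationRing R] [Finite (PrimeSpectrum R)] [CommRing A] [CommRing K] [IsReduced K]
    [Algebra R A] [Algebra A K] [Algebra R K] [IsScalarTower R A K] [Algebra.QuasiFinite R K]
    (B : Subalgebra A K) :
    ∃ I : PrimeSpectrum K → Ideal B, (∀ P, Algebra.QuasiFinite R (B ⧸ I P)) ∧
      ∀ q : Ideal B, q.IsPrime → ∃ P, I P ≤ q := by
  have : Finite (PrimeSpectrum K) := Algebra.QuasiFinite.finite_primeSpectrum R K
  let g (P : PrimeSpectrum K) : B →ₐ[R] P.asIdeal.ResidueField :=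
    (IsScalarTower.toAlgHom R K P.asIdeal.ResidueField).comp (B.val.restrictScalars R)
  refine ⟨fun P ↦ RingHom.ker (g P), fun P ↦
    .of_injective_field (Ideal.kerLiftAlg (g P)) (Ideal.kerLiftAlg_injective _), fun q hq ↦ ?_⟩
  cases nonempty_fintype (PrimeSpectrum K)
  have hinf : Finset.univ.inf (fun P ↦ RingHom.ker (g P)) ≤ q := by
    intro x hx
    have hx0 : (x : K) ∈ nilradical K := by
      rw [nilradical_eq_sInf, Ideal.mem_sInf]
      intro J hJ
      have : J.IsPrime := hJ
      have := (Finset.inf_le (f := fun P ↦ RingHom.ker (g P)) (Finset.mem_univ ⟨J, hJ⟩)) hx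
      have : algebraMap K J.ResidueField x = 0 := this
      simpa using this
    rw [nilradical_eq_zero, Ideal.zero_eq_bot, Ideal.mem_bot] at hx0
    rw [Subtype.ext hx0 (a2 := (0 : B))]
    exact zero_mem q
  obtain ⟨P, -, hP⟩ := (Ideal.IsPrime.inf_le' hq).mp hinf
  exact ⟨P, hP⟩

theorem Subalgebra.finite_primeSpectrum_of_quasiFinite (R : Type*) {A K : Type*} [CommRing R]
    [IsDomain R] [ValuationRing R] [Finite (PrimeSpectrum R)] [CommRing A] [CommRing K]
    [IsReduced K] [Algebra R A] [Algebra A K] [Algebra R K] [IsScalarTower R A K]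
    [Algebra.QuasiFinite R K] (B : Subalgebra A K) : Finite (PrimeSpectrum B) := by
  have : Finite (PrimeSpectrum K) := Algebra.QuasiFinite.finite_primeSpectrum R K
  obtain ⟨I, hI, hle⟩ := B.exists_quasiFinite_quotient (R := R)
  have (P : PrimeSpectrum K) : Finite (PrimeSpectrum (B ⧸ I P)) :=
    Algebra.QuasiFinite.finite_primeSpectrum R _
  refine .of_surjective (fun x : Σ P : PrimeSpectrum K, PrimeSpectrum (B ⧸ I P) ↦
    PrimeSpectrum.comap (Ideal.Quotient.mk (I x.1)) x.2) fun q ↦ ?_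
  obtain ⟨P, hP⟩ := hle q.asIdeal q.2
  have : q ∈ Set.range (PrimeSpectrum.comap (Ideal.Quotient.mk (I P))) := by
    rw [range_comap_of_surjective _ _ Ideal.Quotient.mk_surjective, Ideal.mk_ker]
    exact hP
  obtain ⟨x, hx⟩ := this
  exact ⟨⟨P, x⟩, hx⟩

theorem Subalgebra.quasiFinite_residueField {R A K : Type*} [CommRing R] [IsDomain R]
    [ValuationRing R] [Finite (PrimeSpectrum R)] [CommRing A] [CommRing K] [IsReduced K]
    [Algebra R A] [Algebra A K] [Algebra R K] [IsScalarTower R A K] [Algebra.QuasiFinite R K]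
    (B : Subalgebra A K) (q : Ideal B) [hq : q.IsPrime] :
    Algebra.QuasiFinite R q.ResidueField := by
  obtain ⟨I, hI, hle⟩ := B.exists_quasiFinite_quotient (R := R)
  obtain ⟨P, hP⟩ := hle q hq
  have := hI P
  have : Algebra.QuasiFinite R (B ⧸ q) :=
    .of_surjective_algHom (Ideal.Quotient.factorₐ R hP) (Ideal.Quotient.factor_surjective hP)
  exact .of_isLocalization (S := B ⧸ q) (nonZeroDivisors (B ⧸ q))

/-- A residue field which is quasi-finite over the base is generated as a field over the image of
the base by the residues of finitely many elements. -/
theorem Ideal.ResidueField.exists_finset_subfield_eq_top {R B : Type*} [CommRing R] [CommRing B]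
    [Algebra R B] (q : Ideal B) [q.IsPrime] [Algebra.QuasiFinite R q.ResidueField] :
    ∃ s : Finset B, ∀ F : Subfield q.ResidueField,
      (∀ r : R, algebraMap R q.ResidueField r ∈ F) →
      (∀ b ∈ s, algebraMap B q.ResidueField b ∈ F) → F = ⊤ := by
  classical
  let p := q.under R
  let _ : Algebra p.ResidueField q.ResidueField :=
    (Ideal.ResidueField.mapₐ p q (Algebra.ofId R B) rfl).toRingHom.toAlgebra
  have : IsScalarTower R p.ResidueField q.ResidueField :=
    .of_algebraMap_eq' (Ideal.ResidueField.mapₐ p q (Algebra.ofId R B) rfl).comp_algebraMap.symm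
  have : Algebra.QuasiFinite p.ResidueField q.ResidueField := .of_restrictScalars R _ _
  have : Module.Finite p.ResidueField q.ResidueField := .of_quasiFinite
  obtain ⟨t, ht⟩ := Module.Finite.fg_top (R := p.ResidueField) (M := q.ResidueField)
  have hfrac (x : q.ResidueField) : ∃ a b : B,
      x = algebraMap B q.ResidueField a / algebraMap B q.ResidueField b := by
    obtain ⟨a, b, -, h⟩ := IsFractionRing.div_surjective (A := B ⧸ q) x
    obtain ⟨a, rfl⟩ := Ideal.Quotient.mk_surjective a
    obtain ⟨b, rfl⟩ := Ideal.Quotient.mk_surjective b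
    exact ⟨a, b, h.symm⟩
  choose num den hnd using hfrac
  refine ⟨t.image num ∪ t.image den, fun F hR hB ↦ ?_⟩
  have hκ (x : p.ResidueField) : algebraMap p.ResidueField q.ResidueField x ∈ F := by
    obtain ⟨a, b, -, rfl⟩ := IsFractionRing.div_surjective (A := R ⧸ p) x
    obtain ⟨a, rfl⟩ := Ideal.Quotient.mk_surjective a
    obtain ⟨b, rfl⟩ := Ideal.Quotient.mk_surjective b
    rw [map_div₀, Ideal.algebraMap_quotient_residueField_mk,
      Ideal.algebraMap_quotient_residueField_mk, ← IsScalarTower.algebraMap_apply,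
      ← IsScalarTower.algebraMap_apply]
    exact div_mem (hR a) (hR b)
  rw [eq_top_iff]
  rintro x -
  have hx : x ∈ Submodule.span p.ResidueField (t : Set q.ResidueField) := ht ▸ Submodule.mem_top
  induction hx using Submodule.span_induction with
  | zero => exact zero_mem F
  | add x y _ _ hx hy => exact add_mem hx hy
  | smul c x _ hx =>
    rw [Algebra.smul_def]
    exact mul_mem (hκ c) hx
  | mem x hx =>
    rw [hnd x]
    exact div_mem (hB _ (Finset.mem_union_left _ (Finset.mem_image_of_mem _ hx)))
      (hB _ (Finset.mem_union_right _ (Finset.mem_image_of_mem _ hx)))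

/-- If the integral closure of `A` in `K` has finitely many primes, all of whose residue fields
are quasi-finite over a base ring of `A`, then `A` has a pseudo-integral closure in `K`. -/
theorem exists_isPseudoIntegralClosure_of_quasiFinite_residueField (R : Type*) {A K : Type*}
    [CommRing R] [CommRing A] [CommRing K] [Algebra R A] [Algebra A K] [Algebra R K]
    [IsScalarTower R A K] [Finite (PrimeSpectrum (integralClosure A K))]
    (H : ∀ (q : Ideal (integralClosure A K)) [q.IsPrime],
      Algebra.QuasiFinite R q.ResidueField) :
    ∃ C : Subalgebra A K, IsPseudoIntegralClosure C := by
  classical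
  let B := integralClosure A K
  have hgen (q : PrimeSpectrum B) := by
    have := H q.asIdeal
    exact Ideal.ResidueField.exists_finset_subfield_eq_top (R := R) q.asIdeal
  choose s hs using hgen
  have hsep (x : PrimeSpectrum B × PrimeSpectrum B) :
      ∃ b : B, ¬ x.1.asIdeal ≤ x.2.asIdeal → b ∈ x.1.asIdeal ∧ b ∉ x.2.asIdeal := by
    by_cases h : x.1.asIdeal ≤ x.2.asIdeal
    · exact ⟨0, fun h' ↦ absurd h h'⟩
    · obtain ⟨b, hb⟩ := SetLike.not_le_iff_exists.mp h
      exact ⟨b, fun _ ↦ hb⟩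
  choose sep hsep using hsep
  let T : Set B := (⋃ q, (s q : Set B)) ∪ Set.range sep
  have hT : T.Finite := (Set.finite_iUnion fun q ↦ (s q).finite_toSet).union (Set.finite_range _)
  let C : Subalgebra A K := Algebra.adjoin A (Subtype.val '' T)
  have hle : C ≤ B := Algebra.adjoin_le (by rintro _ ⟨b, -, rfl⟩; exact b.2)
  have hTC (b : B) (hb : b ∈ T) : ∃ c : C, Subalgebra.inclusion hle c = b :=
    ⟨⟨b, Algebra.subset_adjoin ⟨b, hb, rfl⟩⟩, rfl⟩
  have hint : (Subalgebra.inclusion hle).toRingHom.IsIntegral := by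
    intro b
    have h : IsIntegral A b := (integralClosure.isIntegral b)
    obtain ⟨f, hf, hf0⟩ := h
    refine ⟨f.map (algebraMap A C), hf.map _, ?_⟩
    rw [Polynomial.eval₂_map]
    exact hf0
  refine ⟨C, hle, ?_, ⟨?_, ?_⟩, fun q hq ↦ ⟨RingHom.injective _, ?_⟩⟩
  · exact Module.Finite.iff_fg.mpr (fg_adjoin_of_finite (hT.image _)
      (by rintro _ ⟨b, -, rfl⟩; exact b.2))
  · have hle_of (q q' : PrimeSpectrum B)
        (h : PrimeSpectrum.comap (Subalgebra.inclusion hle).toRingHom q =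
          PrimeSpectrum.comap (Subalgebra.inclusion hle).toRingHom q') :
        q.asIdeal ≤ q'.asIdeal := by
      by_contra hn
      obtain ⟨h1, h2⟩ := hsep (q, q') hn
      obtain ⟨c, hc⟩ := hTC (sep (q, q')) (Or.inr ⟨_, rfl⟩)
      rw [← hc] at h1 h2
      have h3 : c ∈ (PrimeSpectrum.comap (Subalgebra.inclusion hle).toRingHom q).asIdeal := h1
      rw [h] at h3
      exact h2 h3
    exact fun q q' h ↦ PrimeSpectrum.ext (le_antisymm (hle_of q q' h) (hle_of q' q h.symm))
  · exact hint.comap_surjective (Subalgebra.inclusion_injective hle)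
  · have hmap (c : C) : residueFieldHom (Subalgebra.inclusion hle).toRingHom q
        (algebraMap C (q.comap (Subalgebra.inclusion hle).toRingHom).ResidueField c) =
        algebraMap B q.ResidueField (Subalgebra.inclusion hle c) :=
      Ideal.ResidueField.map_algebraMap _ _ _ _ _
    refine RingHom.fieldRange_eq_top_iff.mp (hs ⟨q, hq⟩ _ (fun r ↦ ?_) fun b hb ↦ ?_)
    · exact ⟨_, (hmap (algebraMap R C r)).trans rfl⟩
    · obtain ⟨c, rfl⟩ := hTC b (Or.inl (Set.mem_iUnion_of_mem _ hb))
      exact ⟨_, hmap c⟩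

theorem exists_pseudoIntegralClosure_of_henselian_valuation_ring
    {R A K : Type*} [CommRing R] [IsDomain R] [ValuationRing R] [HenselianLocalRing R]
    (hdim : ringKrullDim R < ⊤)
    [CommRing A] [Algebra R A] [Module.Finite R A]
    [CommRing K] [IsReduced K]
    (f : FractionRing (A ⧸ nilradical A) →+* K) (hfin : f.Finite)
    [Algebra A K]
    (hcomp : algebraMap A K =
      (f.comp (algebraMap (A ⧸ nilradical A) (FractionRing (A ⧸ nilradical A)))).comp
        (Ideal.Quotient.mk (nilradical A))) :
    ∃ C : Subalgebra A K, IsPseudoIntegralClosure C := by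
  let Q := FractionRing (A ⧸ nilradical A)
  have : Finite (PrimeSpectrum R) := ValuationRing.finite_primeSpectrum hdim
  let _ : Algebra Q K := f.toAlgebra
  have : Module.Finite Q K := hfin
  let _ : Algebra R K := ((algebraMap A K).comp (algebraMap R A)).toAlgebra
  have : IsScalarTower R A K := .of_algebraMap_eq' rfl
  have : IsScalarTower A Q K := .of_algebraMap_eq' hcomp
  have : IsScalarTower R Q K := .of_algebraMap_eq' <| by
    rw [IsScalarTower.algebraMap_eq R A K, IsScalarTower.algebraMap_eq A Q K, RingHom.comp_assoc,
      ← IsScalarTower.algebraMap_eq R A Q]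
  have : Algebra.QuasiFinite R Q := inferInstance
  have : Algebra.QuasiFinite R K := .trans R Q K
  have := (integralClosure A K).finite_primeSpectrum_of_quasiFinite R
  exact exists_isPseudoIntegralClosure_of_quasiFinite_residueField R fun q _ ↦
    (integralClosure A K).quasiFinite_residueField q
end

section
/- Let p ≠ l be prime numbers, R a henselian valuation ring which is an 𝔽_p-algebra, and A an R-algebra which is free of finite rank d ≥ 1 as an R-module with l ∤ d. Then there exist R-algebras A' and A'' such that: (i) A' is free as an R-module of finite rank prime to l, and Frac(R) ⊗_R A' is an étale Frac(R)-algebra; (ii) there is an R-algebra homomorphism A' → A'' which is a uh-morphism, i.e. integral, bijective on prime spectra, with all residue field extensions purely inseparable; (iii) A'' is free as an R-module of finite rank prime to l; and (iv) there is an R-algebra homomorphism A → A''. -/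
set_option synthInstance.maxHeartbeats 1000000

/-!
STATEMENT 10: Over a henselian valuation ring `R` of characteristic `p`, every finite free
`R`-algebra of rank prime to `l` is corefinable by a generically étale finite free
`R`-algebra of rank prime to `l` followed by a uh-morphism.
-/

open scoped TensorProduct

/-- `φ` induces purely inseparable residue field extensions at every prime. -/
def RingHom.PurelyInseparableResidues {A B : Type*} [CommRing A] [CommRing B] (φ : A →+* B) : Prop :=
  ∀ (q : Ideal B) (_ : q.IsPrime),
    letI := ‹q.IsPrime›
    letI := (residueFieldHom φ q).toAlgebra
    IsPurelyInseparable (IsLocalRing.ResidueField (Localization.AtPrime (q.comap φ)))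
      (IsLocalRing.ResidueField (Localization.AtPrime q))

/-- `Spec(B) → Spec(A)` is a universal homeomorphism: integral, bijective on prime spectra,
purely inseparable residue field extensions. -/
def RingHom.IsUhMorphism {A B : Type*} [CommRing A] [CommRing B] (φ : A →+* B) : Prop :=
  φ.IsIntegral ∧ Function.Bijective (PrimeSpectrum.comap φ) ∧ φ.PurelyInseparableResidues

/-- A packaged `R`-algebra. -/
structure AlgebraPkg (R : Type) [CommRing R] : Type 1 where
  carrier : Type
  [commRing : CommRing carrier]
  [algebra : Algebra R carrier]

attribute [instance] AlgebraPkg.commRing AlgebraPkg.algebra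

open scoped nonZeroDivisors

/-- A finite-dimensional commutative algebra of dimension not divisible by `l` has a residue field
of degree not divisible by `l`. -/
lemma exists_isMaximal_not_dvd_finrank_quotient (K : Type*) {B : Type*} [Field K] [CommRing B]
    [Algebra K B] [Module.Finite K B] {l : ℕ} (h : ¬ l ∣ Module.finrank K B) :
    ∃ m : Ideal B, m.IsMaximal ∧ ¬ l ∣ Module.finrank K (B ⧸ m) := by
  by_contra! hB
  have : IsArtinianRing B := IsArtinianRing.of_finite K B
  have key (N : Type _) [AddCommGroup N] [Module B N] [Module.Finite B N] :
      ∀ [Module K N] [IsScalarTower K B N], l ∣ Module.finrank K N := by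
    refine IsNoetherianRing.induction_on_isQuotientEquivQuotientPrime B (M := N) inferInstance
      (motive := fun N _ _ _ ↦ ∀ [Module K N] [IsScalarTower K B N], l ∣ Module.finrank K N)
      ?_ ?_ ?_
    · intro N _ _ _ _ _ _
      simp [Module.finrank_zero_of_subsingleton]
    · intro N _ _ _ q e _ _
      rw [(e.restrictScalars K).finrank_eq]
      exact hB _ inferInstance
    · intro N₁ _ _ _ N₂ _ _ _ N₃ _ _ _ f g hf hg hfg h₁ h₃ _ _
      let : Module K N₁ := Module.compHom N₁ (algebraMap K B)
      have : IsScalarTower K B N₁ := .of_compHom K B N₁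
      let : Module K N₃ := Module.compHom N₃ (algebraMap K B)
      have : IsScalarTower K B N₃ := .of_compHom K B N₃
      have : Module.Finite K N₂ := .trans B N₂
      rw [← (g.restrictScalars K).finrank_range_add_finrank_ker,
        (LinearMap.range_eq_top (f := g.restrictScalars K)).mpr hg, finrank_top]
      refine dvd_add h₃ ?_
      have e : (g.restrictScalars K).ker = (f.restrictScalars K).range := by
        ext x
        exact hfg x
      rw [e, LinearMap.finrank_range_of_inj (f := f.restrictScalars K) hf]
      exact h₁
  exact h (key B)

/-- An injective homomorphism of rings of characteristic `p` whose range contains all `p ^ n`-th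
powers is a universal homeomorphism. -/
lemma RingHom.IsUhMorphism.of_pow_mem_range {A B : Type*} [CommRing A] [CommRing B]
    {φ : A →+* B} (hφ : Function.Injective φ) {p n : ℕ} (hp : p.Prime) (hpA : (p : A) = 0)
    (h : ∀ b, b ^ p ^ n ∈ φ.range) : φ.IsUhMorphism := by
  have hpos : 0 < p ^ n := pow_pos hp.pos n
  refine ⟨fun b ↦ ?_, (PrimeSpectrum.isHomeomorph_comap φ (fun b ↦ ⟨p ^ n, hpos, h b⟩) ?_).bijective,
    fun q hq ↦ ?_⟩
  · obtain ⟨a, ha⟩ := h b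
    algebraize [φ]
    have hi : _root_.IsIntegral A (b ^ p ^ n) := ha ▸ isIntegral_algebraMap
    exact hi.of_pow hpos
  · rw [(RingHom.injective_iff_ker_eq_bot φ).mp hφ]
    exact bot_le
  · let := (residueFieldHom φ q).toAlgebra
    let k := IsLocalRing.ResidueField (Localization.AtPrime (q.comap φ))
    have hpk : (p : k) = 0 := by
      rw [← map_natCast (algebraMap A k), hpA, map_zero]
    have : CharP k p := (CharP.charP_iff_prime_eq_zero hp).mpr hpk
    have : ExpChar k p := .prime hp
    refine (isPurelyInseparable_iff_pow_mem k p).mpr fun x ↦ ⟨n, ?_⟩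
    obtain ⟨z, rfl⟩ := IsLocalRing.residue_surjective x
    obtain ⟨b, s, rfl⟩ := IsLocalization.exists_mk'_eq q.primeCompl z
    obtain ⟨a, ha⟩ := h b
    obtain ⟨t, ht⟩ := h s
    have htq : t ∈ (q.comap φ).primeCompl := fun htq ↦
      s.2 (hq.mem_of_pow_mem (p ^ n) (by rw [← ht]; exact htq))
    refine ⟨IsLocalRing.residue _ (IsLocalization.mk' _ a ⟨t, htq⟩), ?_⟩
    have := Localization.isLocalHom_localRingHom (q.comap φ) q φ rfl
    change IsLocalRing.ResidueField.map (Localization.localRingHom (q.comap φ) q φ rfl) _ = _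
    rw [IsLocalRing.ResidueField.map_residue, Localization.localRingHom_mk', ← map_pow,
      ← IsLocalization.mk'_pow]
    congr 2
    exact Subtype.ext ht

section Subalgebra

variable {R K L : Type*} [CommRing R] [Field K] [Algebra R K] [Field L] [Algebra K L] [Algebra R L]
  [IsScalarTower R K L]

variable (K) in
/-- The comparison map `K ⊗[R] S → L` for an `R`-subalgebra `S` of an extension `L` of `K`. -/
noncomputable def Subalgebra.tensorToField (S : Subalgebra R L) : K ⊗[R] S →ₐ[K] L :=
  Algebra.TensorProduct.lift (Algebra.ofId K L) S.val fun _ _ ↦ .all _ _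

lemma Subalgebra.tensorToField_tmul (S : Subalgebra R L) (a : K) (s : S) :
    S.tensorToField K (a ⊗ₜ s) = algebraMap K L a * s := rfl

variable [IsDomain R] [IsFractionRing R K]

lemma Subalgebra.tensorToField_injective (S : Subalgebra R L) :
    Function.Injective (S.tensorToField K) := by
  rw [injective_iff_map_eq_zero]
  intro z hz
  obtain ⟨⟨s, r⟩, hr⟩ := IsLocalizedModule.surj R⁰ (TensorProduct.mk R K S 1) z
  have hr' : algebraMap R K r • z = 1 ⊗ₜ[R] s := by
    rw [algebraMap_smul]; exact hr
  have hs : s = 0 := by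
    have := congrArg (S.tensorToField K) hr'
    rw [map_smul, hz, smul_zero, Subalgebra.tensorToField_tmul, map_one, one_mul] at this
    exact Subtype.ext this.symm
  rw [hs, TensorProduct.tmul_zero] at hr'
  exact (smul_eq_zero.mp hr').resolve_left
    (IsFractionRing.to_map_ne_zero_of_mem_nonZeroDivisors r.2)

variable (K) in
/-- The subfield of `L` generated over `K` by an `R`-subalgebra `S`, as the image of `K ⊗[R] S`. -/
noncomputable def Subalgebra.fractionField [Algebra.IsAlgebraic K L] (S : Subalgebra R L) :
    IntermediateField K L :=
  subalgebraEquivIntermediateField (S.tensorToField K).range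

variable (K) in
/-- `K ⊗[R] S` is the subfield of `L` generated by `S`. -/
noncomputable def Subalgebra.tensorEquivFractionField [Algebra.IsAlgebraic K L]
    (S : Subalgebra R L) : K ⊗[R] S ≃ₐ[K] S.fractionField K :=
  AlgEquiv.ofInjective _ S.tensorToField_injective

variable (K) in
lemma Subalgebra.finrank_dvd [Module.Finite K L] (S : Subalgebra R L) [Module.Free R S] :
    Module.finrank R S ∣ Module.finrank K L := by
  rw [← Module.finrank_baseChange (R := K), (S.tensorEquivFractionField K).toLinearEquiv.finrank_eq]
  exact ⟨_, (Module.finrank_mul_finrank K (S.fractionField K) L).symm⟩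

lemma Subalgebra.etale_tensor_of_le_separableClosure [Module.Finite K L] (S : Subalgebra R L)
    (hS : ∀ x ∈ S, x ∈ separableClosure K L) : Algebra.Etale K (K ⊗[R] S) := by
  have hle : S.fractionField K ≤ separableClosure K L := by
    rintro _ ⟨z, rfl⟩
    change S.tensorToField K z ∈ _
    induction z with
    | zero => simp
    | add x y hx hy => rw [map_add]; exact add_mem hx hy
    | tmul a s =>
      rw [Subalgebra.tensorToField_tmul]
      exact mul_mem (algebraMap_mem _ a) (hS s s.2)
  have : Algebra.IsSeparable K (S.fractionField K) := le_separableClosure_iff _ _ _ |>.mp hle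
  have : Algebra.FormallyEtale K (S.fractionField K) := .of_isSeparable K _
  have : Algebra.Etale K (S.fractionField K) :=
    ⟨inferInstance, Algebra.FinitePresentation.of_finiteType.mp inferInstance⟩
  exact .of_equiv (S.tensorEquivFractionField K).symm

end Subalgebra

lemma Subalgebra.free_of_valuationRing {R L : Type*} [CommRing R] [IsDomain R] [ValuationRing R]
    [Field L] [Algebra R L] [FaithfulSMul R L] (S : Subalgebra R L) [Module.Finite R S] :
    Module.Free R S := by
  have : Module.IsTorsionFree R S := inferInstance
  have : Module.Flat R S := by
    rw [Module.Flat.flat_iff_torsion_eq_bot_of_isBezout, ← Submodule.isTorsionFree_iff_torsion_eq_bot]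
    infer_instance
  exact Module.free_of_flat_of_isLocalRing

/-- In characteristic `p`, a finite subalgebra `S` contains a finite subalgebra generated by
`p ^ n`-th powers and containing all `p ^ n`-th powers of elements of `S`. -/
lemma Subalgebra.exists_finite_le_of_pow_mem {R L : Type*} [CommRing R] [CommRing L] [Algebra R L]
    (p n : ℕ) [ExpChar L p] (S T : Subalgebra R L) [Module.Finite R S]
    (hT : ∀ x ∈ S, x ^ p ^ n ∈ T) :
    ∃ S' ≤ S, S' ≤ T ∧ Module.Finite R S' ∧ ∀ x ∈ S, x ^ p ^ n ∈ S' := by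
  obtain ⟨t, ht⟩ : S.toSubmodule.FG := Module.Finite.iff_fg.mp ‹_›
  have htS : ∀ x ∈ t, x ∈ S := fun x hx ↦ by
    rw [← Subalgebra.mem_toSubmodule, ← ht]
    exact Submodule.subset_span hx
  have hle : Algebra.adjoin R ((· ^ p ^ n) '' (t : Set L)) ≤ S := by
    refine Algebra.adjoin_le ?_
    rintro _ ⟨x, hx, rfl⟩
    exact pow_mem (htS x hx) _
  refine ⟨_, hle, Algebra.adjoin_le ?_, ?_, fun x hx ↦ ?_⟩
  · rintro _ ⟨x, hx, rfl⟩
    exact hT x (htS x hx)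
  · refine Module.Finite.iff_fg.mpr (fg_adjoin_of_finite (t.finite_toSet.image _) ?_)
    rintro _ ⟨x, hx, rfl⟩
    have := (Algebra.IsIntegral.isIntegral (R := R) (⟨x, htS x hx⟩ : S)).map S.val
    exact this.pow _
  · rw [← Subalgebra.mem_toSubmodule, ← ht] at hx
    induction hx using Submodule.span_induction with
    | mem x hx => exact Algebra.subset_adjoin ⟨x, hx, rfl⟩
    | zero =>
      rw [zero_pow (expChar_pow_pos L p n).ne']
      exact zero_mem _
    | add x y _ _ hx hy => rw [add_pow_expChar_pow]; exact add_mem hx hy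
    | smul r x _ hx => rw [smul_pow]; exact Subalgebra.smul_mem _ hx _

theorem fpsl'_algebra_corefinable_by_generically_etale_and_uh
    (p l : ℕ) (hp : p.Prime) (hl : l.Prime) (hpl : p ≠ l)
    {R : Type} [CommRing R] [IsDomain R] [ValuationRing R] [HenselianLocalRing R]
    [Algebra (ZMod p) R]
    {A : Type} [CommRing A] [Algebra R A] [Module.Free R A]
    (d : ℕ) (hd : Module.finrank R A = d) (hd1 : 1 ≤ d) (hld : ¬ l ∣ d) :
    ∃ A' A'' : AlgebraPkg R,
      (Module.Free R A'.carrier ∧ Module.Finite R A'.carrier ∧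
        ¬ l ∣ Module.finrank R A'.carrier ∧
        Algebra.Etale (FractionRing R) ((FractionRing R) ⊗[R] A'.carrier)) ∧
      (∃ g : A'.carrier →ₐ[R] A''.carrier,
        RingHom.IsUhMorphism (g : A'.carrier →+* A''.carrier)) ∧
      (Module.Free R A''.carrier ∧ Module.Finite R A''.carrier ∧
        ¬ l ∣ Module.finrank R A''.carrier) ∧
      Nonempty (A →ₐ[R] A''.carrier) := by
  have : Module.Finite R A := Module.finite_of_finrank_pos (hd ▸ hd1)
  let K := FractionRing R
  obtain ⟨m, hm, hml⟩ := exists_isMaximal_not_dvd_finrank_quotient K (B := K ⊗[R] A) (l := l)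
    (by rwa [Module.finrank_baseChange, hd])
  let L := (K ⊗[R] A) ⧸ m
  let : Field L := Ideal.Quotient.field m
  have hpR : (p : R) = 0 := by
    have : Fact p.Prime := ⟨hp⟩
    rw [← map_natCast (algebraMap (ZMod p) R), ZMod.natCast_self, map_zero]
  have hpK : (p : K) = 0 := by rw [← map_natCast (algebraMap R K), hpR, map_zero]
  have : CharP K p := (CharP.charP_iff_prime_eq_zero hp).mpr hpK
  have : ExpChar K p := .prime hp
  have : ExpChar L p := expChar_of_injective_algebraMap (algebraMap K L).injective p
  have : ExpChar (separableClosure K L) p :=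
    expChar_of_injective_algebraMap (algebraMap K (separableClosure K L)).injective p
  obtain ⟨n, hn⟩ := (IsPurelyInseparable.hasExponent_iff' (separableClosure K L) L p).mp
    inferInstance
  let f : A →ₐ[R] L :=
    ((Ideal.Quotient.mkₐ K m).restrictScalars R).comp Algebra.TensorProduct.includeRight
  have : Module.Finite R f.range := .of_surjective f.rangeRestrict.toLinearMap f.rangeRestrict_surjective
  obtain ⟨S', hS', hsep, _, hpow⟩ := f.range.exists_finite_le_of_pow_mem p n
    ((separableClosure K L).toSubalgebra.restrictScalars R) fun x _ ↦ by
      obtain ⟨y, hy⟩ := hn x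
      exact hy ▸ y.2
  have : FaithfulSMul R L := .trans R K L
  have : Module.Free R f.range := f.range.free_of_valuationRing
  have : Module.Free R S' := S'.free_of_valuationRing
  refine ⟨⟨S'⟩, ⟨f.range⟩, ⟨‹_›, ‹_›, fun h ↦ hml (h.trans (S'.finrank_dvd K)),
    S'.etale_tensor_of_le_separableClosure hsep⟩,
    ⟨Subalgebra.inclusion hS', .of_pow_mem_range (p := p) (n := n)
      (Subalgebra.inclusion_injective hS') hp ?_ fun b ↦ ?_⟩,
    ⟨‹_›, ‹_›, fun h ↦ hml (h.trans (f.range.finrank_dvd K))⟩, ⟨f.rangeRestrict⟩⟩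
  · rw [← map_natCast (algebraMap R S'), hpR, map_zero]
  · exact ⟨⟨_, hpow b b.2⟩, rfl⟩
end
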